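/- Let F be a CNF formula over V and S ⊆ V. Suppose the formula F[S] is satisfiable, i.e., there is an assignment of the variables of S satisfying, for every index i ∈ F_S, the restricted clause F i ∩ (literals over S). Then sat(F) = sat(F ∖ F_S) + |F_S|. -/

import Mathlib

/-!
Every clause of `F` either meets `S` or survives in `F ∖ F_S`, so for each assignment `τ` the number
of satisfied clauses splits as (satisfied clauses of `F ∖ F_S`) + (satisfied clauses in `F_S`); this
is `satCount_split`. The second term is at most `|F_S|`, which gives `≤`. For `≥`, take any `τ`
and overwrite it on `S` by the assignment satisfying `F[S]`: the clauses of `F ∖ F_S` contain no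
variable of `S`, so their status is unchanged, while all clauses of `F_S` become satisfied.
-/

open scoped Classical

/-- A truth assignment `τ` satisfies a clause `c` (a finite set of literals `(v, b)`)
if some literal `(v, b) ∈ c` has `τ v = b`. -/
def Satisfies {V : Type*} (τ : V → Bool) (c : Finset (V × Bool)) : Prop :=
  ∃ l ∈ c, τ l.1 = l.2

/-- `satCount F τ` is the number of indices whose clause is satisfied by `τ`. -/
noncomputable def satCount {V I : Type*} [Fintype I]
    (F : I → Finset (V × Bool)) (τ : V → Bool) : ℕ :=
  (Finset.univ.filter fun i => Satisfies τ (F i)).card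

/-- `satMax F` is the maximum of `satCount F τ` over all assignments `τ`. -/
noncomputable def satMax {V I : Type*} [Fintype V] [Fintype I]
    (F : I → Finset (V × Bool)) : ℕ :=
  Finset.univ.sup fun τ : V → Bool => satCount F τ

/-- `M` is a matching of the formula `F`: each pair `(v, i) ∈ M` has variable `v`
occurring in clause `F i`, and the pairs have pairwise distinct variables and
pairwise distinct indices. -/
def IsMatching {V I : Type*} (F : I → Finset (V × Bool)) (M : Finset (V × I)) : Prop :=
  (∀ p ∈ M, ∃ b, (p.1, b) ∈ F p.2) ∧
  ∀ p ∈ M, ∀ q ∈ M, p ≠ q → p.1 ≠ q.1 ∧ p.2 ≠ q.2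

/-- The matching number `ν(F)`: the largest size of a matching of `F`. -/
noncomputable def matchNum {V I : Type*} [Fintype V] [Fintype I]
    (F : I → Finset (V × Bool)) : ℕ :=
  (Finset.univ.filter fun M : Finset (V × I) => IsMatching F M).sup Finset.card

theorem satCount_split {V I : Type*} [Fintype I] (F : I → Finset (V × Bool))
    (P : I → Prop) [DecidablePred P] (τ : V → Bool) :
    satCount F τ = satCount (fun i : {i : I // ¬ P i} => F i.1) τ +
      (Finset.univ.filter fun i : I => P i ∧ Satisfies τ (F i)).card := by
  have hsub : satCount (fun i : {i : I // ¬ P i} => F i.1) τ =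
      (Finset.univ.filter fun i : I => ¬ P i ∧ Satisfies τ (F i)).card := by
    unfold satCount
    rw [← Finset.card_map (Function.Embedding.subtype fun i : I => ¬ P i)]
    congr 1
    ext i
    simp [and_comm]
  rw [hsub, satCount,
    ← Finset.card_filter_add_card_filter_not (s := Finset.univ.filter fun i => Satisfies τ (F i)) P,
    Finset.filter_filter, Finset.filter_filter, add_comm]
  simp only [and_comm]

/-- If `F[S]` is satisfiable (some assignment of the variables of `S` satisfies every
clause of `F_S` restricted to literals over `S`), then `sat(F) = sat(F ∖ F_S) + |F_S|`. -/
theorem stmt7 {V I : Type*} [Fintype V] [Fintype I] (F : I → Finset (V × Bool))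
    (hne : ∀ i, (F i).Nonempty)
    (hone : ∀ i v b b', (v, b) ∈ F i → (v, b') ∈ F i → b = b')
    (S : Finset V)
    (hsat : ∃ σ : V → Bool,
      ∀ i : I, (∃ l ∈ F i, l.1 ∈ S) → ∃ l ∈ F i, l.1 ∈ S ∧ σ l.1 = l.2) :
    satMax F =
      satMax (fun i : {i : I // ¬ ∃ l ∈ F i, l.1 ∈ S} => F i.1) +
      (Finset.univ.filter fun i : I => ∃ l ∈ F i, l.1 ∈ S).card := by
  obtain ⟨σ, hσ⟩ := hsat
  apply le_antisymm
  · refine Finset.sup_le fun τ _ => ?_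
    rw [satCount_split F (fun i => ∃ l ∈ F i, l.1 ∈ S) τ]
    refine add_le_add (Finset.le_sup (f := fun τ : V → Bool =>
      satCount (fun i : {i : I // ¬ ∃ l ∈ F i, l.1 ∈ S} => F i.1) τ) (Finset.mem_univ τ)) ?_
    exact Finset.card_le_card (Finset.monotone_filter_right _ fun i _ h => h.1)
  · obtain ⟨τ, -, hτ⟩ := Finset.exists_mem_eq_sup Finset.univ Finset.univ_nonempty
      (fun τ : V → Bool => satCount (fun i : {i : I // ¬ ∃ l ∈ F i, l.1 ∈ S} => F i.1) τ)
    let ρ : V → Bool := fun v => if v ∈ S then σ v else τ v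
    have hρ : satCount F ρ ≤ satMax F :=
      Finset.le_sup (f := fun τ : V → Bool => satCount F τ) (Finset.mem_univ ρ)
    refine le_trans (le_of_eq ?_) hρ
    rw [satCount_split F (fun i => ∃ l ∈ F i, l.1 ∈ S) ρ, satMax, hτ]
    congr 1
    · unfold satCount
      congr 1
      refine Finset.filter_congr fun i _ => exists_congr fun l => and_congr_right fun hl => ?_
      have hlS : l.1 ∉ S := fun h => i.2 ⟨l, hl, h⟩
      simp [ρ, hlS]
    · congr 1
      refine Finset.filter_congr fun i _ => ⟨fun h => ⟨h, ?_⟩, fun h => h.1⟩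
      obtain ⟨l, hl, hlS, hlσ⟩ := hσ i h
      exact ⟨l, hl, by simp [ρ, hlS, hlσ]⟩
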